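/- For every pair of points P and Q in ℝ³ there exists a minimizing geodesic Γ : [0,1] → ℝ³ joining P to Q, i.e. a curve which is Lipschitz continuous with respect to the metric d_F, satisfies Γ(0) = P, Γ(1) = Q and L(Γ) = d_F(P,Q), and which can be realized as the uniform limit in the metric d_F of a sequence of admissible locally Lipschitz curves Γ_j joining P to Q with E(Π(Γ_j)) → d_F(P,Q). -/

import Mathlib

open MeasureTheory Set Filter Topology
open scoped ENNReal

noncomputable section

/-- The Euclidean norm of a vector in `ℝ × ℝ`. -/
def enorm2 (v : ℝ × ℝ) : ℝ := Real.sqrt (v.1 ^ 2 + v.2 ^ 2)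

/-- The degenerate length `E(γ) = ∫ₐᵇ F(γ(t)) |γ'(t)| dt` of a planar curve. -/
def degLen (F : ℝ × ℝ → ℝ) (a b : ℝ) (γ : ℝ → ℝ × ℝ) : ℝ :=
  ∫ t in a..b, F (γ t) * enorm2 (deriv γ t)

/-- The signed area `𝒜(γ) = ∫ₐᵇ γ¹(t) (γ²)'(t) dt` of a planar curve. -/
def sArea (a b : ℝ) (γ : ℝ → ℝ × ℝ) : ℝ :=
  ∫ t in a..b, (γ t).1 * deriv (fun s => (γ s).2) t

/-- A locally Lipschitz curve on `[a,b]` joining `p` to `q`. -/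
def IsCurve (a b : ℝ) (γ : ℝ → ℝ × ℝ) (p q : ℝ × ℝ) : Prop :=
  a ≤ b ∧ LocallyLipschitz γ ∧ γ a = p ∧ γ b = q

/-- The standing hypotheses on the potential `W`: smooth, nonnegative, vanishing exactly at the
two distinct wells `pm` and `pp`, with positive definite Hessians there, and bounded away from
zero near infinity (`liminf_{|p|→∞} W(p) > 0`). -/
structure TwoWell (W : ℝ × ℝ → ℝ) (pm pp : ℝ × ℝ) : Prop where
  smooth : ContDiff ℝ (⊤ : ℕ∞) W
  nonneg : ∀ p, 0 ≤ W p
  wells_ne : pm ≠ pp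
  zeroSet : ∀ p, W p = 0 ↔ p = pm ∨ p = pp
  hess_m : ∀ v : ℝ × ℝ, v ≠ 0 → 0 < iteratedFDeriv ℝ 2 W pm ![v, v]
  hess_p : ∀ v : ℝ × ℝ, v ≠ 0 → 0 < iteratedFDeriv ℝ 2 W pp ![v, v]
  coercive : ∃ c > 0, ∃ R : ℝ, ∀ p : ℝ × ℝ, R ≤ ‖p‖ → c ≤ W p

/-- The singular Carnot–Carathéodory distance on `ℝ³` induced by the conformal factor `F`:
the infimum of degenerate lengths of locally Lipschitz planar curves joining the planar
projections of `P` and `Q` whose signed area equals the difference of third coordinates. -/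
def dCC (F : ℝ × ℝ → ℝ) (P Q : ℝ × ℝ × ℝ) : ℝ :=
  sInf { x | ∃ a b γ, IsCurve a b γ (P.1, P.2.1) (Q.1, Q.2.1) ∧
      sArea a b γ = Q.2.2 - P.2.2 ∧ degLen F a b γ = x }

/-- The length of a curve in `ℝ³` with respect to the metric `dCC F`: the supremum over
finite partitions of the sums of distances of consecutive sample points. -/
def pathLen (F : ℝ × ℝ → ℝ) (a b : ℝ) (Γ : ℝ → ℝ × ℝ × ℝ) : ℝ :=
  sSup { x | ∃ (n : ℕ) (t : Fin (n + 1) → ℝ), Monotone t ∧ t 0 = a ∧ t (Fin.last n) = b ∧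
      x = ∑ i : Fin n, dCC F (Γ (t i.castSucc)) (Γ (t i.succ)) }

/-- A curve `Γ = (Γ¹,Γ²,Γ³) : ℝ → ℝ³` is admissible on `[a,b]` if
`(Γ³)'(t) = Γ¹(t) (Γ²)'(t)` for a.e. `t ∈ (a,b)`. -/
def Admissible (a b : ℝ) (Γ : ℝ → ℝ × ℝ × ℝ) : Prop :=
  ∀ᵐ t : ℝ ∂volume, t ∈ Set.Ioo a b →
    deriv (fun s => (Γ s).2.2) t = (Γ t).1 * deriv (fun s => (Γ s).2.1) t

/-- The planar projection `Π(Γ) = (Γ¹,Γ²)` of a curve in `ℝ³`. -/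
def projCurve (Γ : ℝ → ℝ × ℝ × ℝ) : ℝ → ℝ × ℝ := fun t => ((Γ t).1, (Γ t).2.1)


theorem LL_lip {X : Type*} [PseudoMetricSpace X] {γ : ℝ → X} (h : LocallyLipschitz γ) (a b : ℝ) :
    ∃ K, LipschitzOnWith K γ (uIcc a b) :=
  h.locallyLipschitzOn.exists_lipschitzOnWith_of_compact isCompact_uIcc

theorem LL_deriv_bound {X : Type*} [NormedAddCommGroup X] [NormedSpace ℝ X] {γ : ℝ → X}
    (h : LocallyLipschitz γ) (a b : ℝ) :
    ∃ C : ℝ, ∀ t ∈ uIcc a b, ‖deriv γ t‖ ≤ C := by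
  have hc : IsCompact (Icc (min a b - 1) (max a b + 1)) := isCompact_Icc
  obtain ⟨K, hK⟩ := (h.locallyLipschitzOn).exists_lipschitzOnWith_of_compact hc
  refine ⟨K, fun t ht => norm_deriv_le_of_lipschitzOn (Icc_mem_nhds ?_ ?_) hK⟩
  · linarith [show min a b ≤ t from ht.1]
  · linarith [show t ≤ max a b from ht.2]

theorem LL_ae_diff {γ : ℝ → ℝ × ℝ} (h : LocallyLipschitz γ) (a b : ℝ) :
    ∀ᵐ t : ℝ, t ∈ uIcc a b → DifferentiableAt ℝ γ t := by
  obtain ⟨K, hK⟩ := LL_lip h a b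
  exact hK.absolutelyContinuousOnInterval.boundedVariationOn.ae_differentiableAt_of_mem_uIcc

theorem bdd_intervalIntegrable {f : ℝ → ℝ} (hf : Measurable f) {a b C : ℝ}
    (hC : ∀ t ∈ uIcc a b, |f t| ≤ C) : IntervalIntegrable f volume a b := by
  rw [intervalIntegrable_iff]
  refine Measure.integrableOn_of_bounded (M := C) (by simp) hf.aestronglyMeasurable ?_
  refine (ae_restrict_iff' measurableSet_uIoc).2 (Eventually.of_forall fun t ht => ?_)
  exact hC t (uIoc_subset_uIcc ht)

theorem enorm2_nonneg (v : ℝ × ℝ) : 0 ≤ enorm2 v := Real.sqrt_nonneg _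
theorem enorm2_cont : Continuous enorm2 := by unfold enorm2; fun_prop
theorem enorm2_smul (c : ℝ) (v : ℝ × ℝ) : enorm2 (c • v) = |c| * enorm2 v := by
  simp only [enorm2, Prod.smul_fst, Prod.smul_snd, smul_eq_mul]
  rw [← Real.sqrt_sq_eq_abs, ← Real.sqrt_mul (sq_nonneg c)]
  congr 1; ring
theorem enorm2_neg (v : ℝ × ℝ) : enorm2 (-v) = enorm2 v := by
  simp [enorm2]
theorem fst_le_enorm2 (v : ℝ × ℝ) : |v.1| ≤ enorm2 v :=
  Real.abs_le_sqrt (by nlinarith [sq_nonneg v.2])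
theorem snd_le_enorm2 (v : ℝ × ℝ) : |v.2| ≤ enorm2 v :=
  Real.abs_le_sqrt (by nlinarith [sq_nonneg v.1])
theorem norm_le_enorm2 (v : ℝ × ℝ) : ‖v‖ ≤ enorm2 v := by
  rw [Prod.norm_def]; exact max_le (fst_le_enorm2 v) (snd_le_enorm2 v)

theorem deg_int {F : ℝ × ℝ → ℝ} (hF : Continuous F) {γ : ℝ → ℝ × ℝ} (h : LocallyLipschitz γ)
    (a b : ℝ) : IntervalIntegrable (fun t => F (γ t) * enorm2 (deriv γ t)) volume a b := by
  obtain ⟨C, hC⟩ := LL_deriv_bound h a b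
  have hcont : Continuous fun t => F (γ t) := hF.comp h.continuous
  have hm : Measurable fun t => enorm2 (deriv γ t) :=
    enorm2_cont.measurable.comp (measurable_deriv γ)
  have h2 : IntervalIntegrable (fun t => enorm2 (deriv γ t)) volume a b := by
    refine bdd_intervalIntegrable hm (C := Real.sqrt (C ^ 2 + C ^ 2)) fun t ht => ?_
    rw [abs_of_nonneg (enorm2_nonneg _)]
    apply Real.sqrt_le_sqrt
    have h1 := (norm_fst_le (deriv γ t)).trans (hC t ht)
    have h2 := (norm_snd_le (deriv γ t)).trans (hC t ht)
    exact add_le_add (sq_le_sq' (abs_le.1 h1).1 (abs_le.1 h1).2)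
      (sq_le_sq' (abs_le.1 h2).1 (abs_le.1 h2).2)
  exact h2.continuousOn_mul hcont.continuousOn

theorem LL_fst {γ : ℝ → ℝ × ℝ} (h : LocallyLipschitz γ) : LocallyLipschitz fun t => (γ t).1 :=
  LipschitzWith.prod_fst.locallyLipschitz.comp h
theorem LL_snd {γ : ℝ → ℝ × ℝ} (h : LocallyLipschitz γ) : LocallyLipschitz fun t => (γ t).2 :=
  LipschitzWith.prod_snd.locallyLipschitz.comp h

theorem LL_deriv_int {f : ℝ → ℝ} (h : LocallyLipschitz f) (a b : ℝ) :
    IntervalIntegrable (deriv f) volume a b := by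
  obtain ⟨C, hC⟩ := LL_deriv_bound h a b
  exact bdd_intervalIntegrable (measurable_deriv f) hC

theorem LL_ftc {f : ℝ → ℝ} (h : LocallyLipschitz f) (a b : ℝ) :
    ∫ t in a..b, deriv f t = f b - f a := by
  obtain ⟨K, hK⟩ := LL_lip h a b
  exact hK.absolutelyContinuousOnInterval.integral_deriv_eq_sub

theorem area_int {γ : ℝ → ℝ × ℝ} (h : LocallyLipschitz γ)
    (a b : ℝ) : IntervalIntegrable (fun t => (γ t).1 * deriv (fun s => (γ s).2) t) volume a b :=
  (LL_deriv_int (LL_snd h) a b).continuousOn_mul (LL_fst h).continuous.continuousOn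

theorem deriv_fst {γ : ℝ → ℝ × ℝ} {t : ℝ} (h : DifferentiableAt ℝ γ t) :
    deriv (fun s => (γ s).1) t = (deriv γ t).1 :=
  ((hasFDerivAt_fst (𝕜 := ℝ) (p := γ t)).comp_hasDerivAt t h.hasDerivAt).deriv
theorem deriv_snd {γ : ℝ → ℝ × ℝ} {t : ℝ} (h : DifferentiableAt ℝ γ t) :
    deriv (fun s => (γ s).2) t = (deriv γ t).2 :=
  ((hasFDerivAt_snd (𝕜 := ℝ) (p := γ t)).comp_hasDerivAt t h.hasDerivAt).deriv

/-! degLen, sArea algebra -/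

theorem degLen_nonneg {F : ℝ × ℝ → ℝ} (hF : ∀ p, 0 ≤ F p) {a b : ℝ} (hab : a ≤ b)
    (γ : ℝ → ℝ × ℝ) : 0 ≤ degLen F a b γ :=
  intervalIntegral.integral_nonneg hab fun _ _ => mul_nonneg (hF _) (enorm2_nonneg _)

theorem degLen_add {F : ℝ × ℝ → ℝ} (hF : Continuous F) {γ : ℝ → ℝ × ℝ} (h : LocallyLipschitz γ)
    (a b c : ℝ) : degLen F a b γ + degLen F b c γ = degLen F a c γ :=
  intervalIntegral.integral_add_adjacent_intervals (deg_int hF h _ _) (deg_int hF h _ _)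

theorem sArea_add {γ : ℝ → ℝ × ℝ} (h : LocallyLipschitz γ)
    (a b c : ℝ) : sArea a b γ + sArea b c γ = sArea a c γ :=
  intervalIntegral.integral_add_adjacent_intervals (area_int h _ _) (area_int h _ _)

theorem ev_eq_of_Icc {X : Type*} {γ η : ℝ → X} {a b : ℝ} (h : ∀ t ∈ Icc a b, γ t = η t)
    {t : ℝ} (ht : t ∈ Ioo a b) : γ =ᶠ[𝓝 t] η := by
  filter_upwards [Icc_mem_nhds ht.1 ht.2] with s hs using h s hs

theorem integral_congr_Ioo {f g : ℝ → ℝ} {a b : ℝ} (hab : a ≤ b) (h : ∀ t ∈ Ioo a b, f t = g t) :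
    ∫ t in a..b, f t = ∫ t in a..b, g t := by
  rw [intervalIntegral.integral_of_le hab, intervalIntegral.integral_of_le hab,
    integral_Ioc_eq_integral_Ioo, integral_Ioc_eq_integral_Ioo]
  exact setIntegral_congr_fun measurableSet_Ioo h

theorem degLen_congr (F : ℝ × ℝ → ℝ) {γ η : ℝ → ℝ × ℝ} {a b : ℝ} (hab : a ≤ b)
    (h : ∀ t ∈ Icc a b, γ t = η t) : degLen F a b γ = degLen F a b η := by
  refine integral_congr_Ioo hab fun t ht => ?_
  have := ev_eq_of_Icc h ht
  simp only [this.eq_of_nhds, this.deriv_eq]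

theorem sArea_congr {γ η : ℝ → ℝ × ℝ} {a b : ℝ} (hab : a ≤ b)
    (h : ∀ t ∈ Icc a b, γ t = η t) : sArea a b γ = sArea a b η := by
  refine integral_congr_Ioo hab fun t ht => ?_
  have := ev_eq_of_Icc h ht
  have h2 : (fun s => (γ s).2) =ᶠ[𝓝 t] fun s => (η s).2 := this.fun_comp Prod.snd
  simp only [this.eq_of_nhds, h2.deriv_eq]

theorem deriv_comp_aff {X : Type*} [NormedAddCommGroup X] [NormedSpace ℝ X] (γ : ℝ → X)
    (c d t : ℝ) : deriv (fun s => γ (c * s + d)) t = c • deriv γ (c * t + d) := by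
  have := deriv_comp_mul_left (x := t) c (fun x => γ (x + d))
  rw [this, deriv_comp_add_const]

theorem degLen_aff (F : ℝ × ℝ → ℝ) (γ : ℝ → ℝ × ℝ) {c : ℝ} (hc : 0 ≤ c) (d a b : ℝ) :
    degLen F a b (fun s => γ (c * s + d)) = degLen F (c * a + d) (c * b + d) γ := by
  unfold degLen
  rw [← intervalIntegral.smul_integral_comp_mul_add, ← intervalIntegral.integral_smul]
  congr 1; ext t
  rw [deriv_comp_aff, enorm2_smul, abs_of_nonneg hc, smul_eq_mul]; ring

theorem sArea_aff (γ : ℝ → ℝ × ℝ) (c d a b : ℝ) :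
    sArea a b (fun s => γ (c * s + d)) = sArea (c * a + d) (c * b + d) γ := by
  unfold sArea
  rw [← intervalIntegral.smul_integral_comp_mul_add, ← intervalIntegral.integral_smul]
  congr 1; ext t
  rw [deriv_comp_aff (fun s => (γ s).2), smul_eq_mul, smul_eq_mul]; ring

theorem LL_aff {X : Type*} [PseudoMetricSpace X] {γ : ℝ → X} (h : LocallyLipschitz γ) (c d : ℝ) :
    LocallyLipschitz fun s => γ (c * s + d) := by
  have : LocallyLipschitz fun s : ℝ => c * s + d :=
    ContDiff.locallyLipschitz (𝕂 := ℝ) (by fun_prop)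
  exact h.comp this

theorem degLen_neg (F : ℝ × ℝ → ℝ) (γ : ℝ → ℝ × ℝ) (a b : ℝ) :
    degLen F (-b) (-a) (fun s => γ (-s)) = degLen F a b γ := by
  unfold degLen
  rw [show (∫ t in a..b, F (γ t) * enorm2 (deriv γ t)) =
    ∫ t in (-(-a))..(-(-b)), F (γ t) * enorm2 (deriv γ t) by simp,
    ← intervalIntegral.integral_comp_neg]
  simp only [deriv_comp_neg, enorm2_neg, neg_neg]

theorem sArea_neg (γ : ℝ → ℝ × ℝ) (a b : ℝ) :
    sArea (-b) (-a) (fun s => γ (-s)) = - sArea a b γ := by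
  have := sArea_aff γ (-1) 0 (-b) (-a)
  simp only [neg_mul, one_mul, add_zero, neg_neg] at this
  rw [this]; exact intervalIntegral.integral_symm _ _

theorem LL_glue {γ η : ℝ → ℝ × ℝ} (h : LocallyLipschitz γ) (h' : LocallyLipschitz η) (b : ℝ) :
    LocallyLipschitz fun t => γ (min t b) + (η (max t b) - η b) := by
  refine LocallyLipschitz.add (h.comp (LocallyLipschitz.id.min_const b))
    (LocallyLipschitz.sub (h'.comp (LocallyLipschitz.id.max_const b)) (LocallyLipschitz.const _))

/-! dCC basics -/
theorem dCC_bdd {F : ℝ × ℝ → ℝ} (hF : ∀ p, 0 ≤ F p) (P Q : ℝ × ℝ × ℝ) :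
    BddBelow { x | ∃ a b γ, IsCurve a b γ (P.1, P.2.1) (Q.1, Q.2.1) ∧
      sArea a b γ = Q.2.2 - P.2.2 ∧ degLen F a b γ = x } := by
  refine ⟨0, ?_⟩
  rintro x ⟨a, b, γ, h, -, rfl⟩
  exact degLen_nonneg hF h.1 γ

theorem dCC_nonneg {F : ℝ × ℝ → ℝ} (hF : ∀ p, 0 ≤ F p) (P Q : ℝ × ℝ × ℝ) : 0 ≤ dCC F P Q := by
  refine Real.sInf_nonneg ?_
  rintro x ⟨a, b, γ, h, -, rfl⟩
  exact degLen_nonneg hF h.1 γ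

theorem dCC_le {F : ℝ × ℝ → ℝ} (hF : ∀ p, 0 ≤ F p) {P Q : ℝ × ℝ × ℝ} {a b : ℝ} {γ : ℝ → ℝ × ℝ}
    (h : IsCurve a b γ (P.1, P.2.1) (Q.1, Q.2.1)) (h2 : sArea a b γ = Q.2.2 - P.2.2) :
    dCC F P Q ≤ degLen F a b γ := csInf_le (dCC_bdd hF P Q) ⟨a, b, γ, h, h2, rfl⟩

theorem dCC_symm_le {F : ℝ × ℝ → ℝ} (P Q : ℝ × ℝ × ℝ) : dCC F P Q = dCC F Q P := by
  unfold dCC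
  congr 1
  have key : ∀ P Q : ℝ × ℝ × ℝ, { x | ∃ a b γ, IsCurve a b γ (P.1, P.2.1) (Q.1, Q.2.1) ∧
      sArea a b γ = Q.2.2 - P.2.2 ∧ degLen F a b γ = x } ⊆
      { x | ∃ a b γ, IsCurve a b γ (Q.1, Q.2.1) (P.1, P.2.1) ∧
      sArea a b γ = P.2.2 - Q.2.2 ∧ degLen F a b γ = x } := by
    rintro P Q x ⟨a, b, γ, h, h2, rfl⟩
    refine ⟨-b, -a, fun s => γ (-s), ⟨neg_le_neg h.1, ?_, ?_, ?_⟩, ?_, degLen_neg F γ a b⟩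
    · simpa using LL_aff h.2.1 (-1) 0
    · simpa using h.2.2.2
    · simpa using h.2.2.1
    · rw [sArea_neg, h2]; ring
  exact (key P Q).antisymm (key Q P)

/-- The lift of a planar curve. -/
def liftC (z a : ℝ) (γ : ℝ → ℝ × ℝ) (t : ℝ) : ℝ × ℝ × ℝ :=
  ((γ t).1, (γ t).2, z + sArea a t γ)

theorem dCC_lift_le {F : ℝ × ℝ → ℝ} (hF : ∀ p, 0 ≤ F p) {γ : ℝ → ℝ × ℝ} (h : LocallyLipschitz γ)
    (z a : ℝ) {s t : ℝ} (hst : s ≤ t) :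
    dCC F (liftC z a γ s) (liftC z a γ t) ≤ degLen F s t γ := by
  refine dCC_le hF ⟨hst, h, rfl, rfl⟩ ?_
  simp only [liftC]
  rw [← sArea_add h a s t]; ring

theorem LL_lift {γ : ℝ → ℝ × ℝ} (h : LocallyLipschitz γ) (z a : ℝ) :
    LocallyLipschitz (liftC z a γ) := by
  refine (LL_fst h).prodMk ((LL_snd h).prodMk ?_)
  intro t
  obtain ⟨C, hC⟩ := LL_deriv_bound (LL_snd h) (t - 1) (t + 1)
  obtain ⟨B, hB⟩ := (isCompact_uIcc (a := t - 1) (b := t + 1)).exists_bound_of_continuousOn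
    (LL_fst h).continuous.continuousOn
  refine ⟨Real.toNNReal (B * C), uIcc (t - 1) (t + 1), ?_, ?_⟩
  · rw [uIcc_of_le (by linarith)]; exact Icc_mem_nhds (by linarith) (by linarith)
  · refine LipschitzOnWith.of_dist_le_mul fun x hx y hy => ?_
    rw [dist_comm, dist_comm x y, Real.dist_eq, Real.dist_eq, ← sArea_add h a x y]
    have h1 : z + (sArea a x γ + sArea x y γ) - (z + sArea a x γ) = sArea x y γ := by ring
    rw [h1]
    have h0 : 0 ≤ B * C := mul_nonneg ((norm_nonneg _).trans (hB x hx))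
      ((norm_nonneg _).trans (hC x hx))
    rw [Real.coe_toNNReal _ h0]
    rw [← Real.norm_eq_abs, ← Real.norm_eq_abs]
    unfold sArea
    refine intervalIntegral.norm_integral_le_of_norm_le_const (E := ℝ) fun u hu => ?_
    have hu' : u ∈ uIcc (t - 1) (t + 1) := uIcc_subset_uIcc hx hy (uIoc_subset_uIcc hu)
    rw [norm_mul]
    exact mul_le_mul (hB u hu') (hC u hu') (norm_nonneg _) ((norm_nonneg _).trans (hB x hx))

theorem adm_lift {γ : ℝ → ℝ × ℝ} (h : LocallyLipschitz γ) (z a b : ℝ) :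
    Admissible a b (liftC z a γ) := by
  filter_upwards [(area_int h a b).ae_hasDerivAt_integral] with t ht htI
  have := (ht (by rw [uIcc_of_le (htI.1.trans htI.2).le]; exact Ioo_subset_Icc_self htI) a
    left_mem_uIcc).const_add z
  exact this.deriv


/-! An explicit connecting curve. -/
def cD (P X : ℝ × ℝ × ℝ) : ℝ :=
  X.2.2 - P.2.2 - P.1 * (X.2.1 - P.2.1) - (X.1 - P.1) * (X.2.1 - P.2.1) / 2
def cA (P X : ℝ × ℝ × ℝ) : ℝ := Real.sqrt (cD P X) + Real.sqrt (-cD P X)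
def cB (P X : ℝ × ℝ × ℝ) : ℝ := Real.sqrt (cD P X) - Real.sqrt (-cD P X)
def cPath (P X : ℝ × ℝ × ℝ) (t : ℝ) : ℝ × ℝ :=
  (P.1 + t * (X.1 - P.1) + cA P X * (-2 * t ^ 3 + 3 * t ^ 2 - t),
   P.2.1 + t * (X.2.1 - P.2.1) + cB P X * (-350 * t ^ 4 + 700 * t ^ 3 - 420 * t ^ 2 + 70 * t))
def cPath' (P X : ℝ × ℝ × ℝ) (t : ℝ) : ℝ × ℝ :=
  ((X.1 - P.1) + cA P X * (-6 * t ^ 2 + 6 * t - 1),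
   (X.2.1 - P.2.1) + cB P X * (-1400 * t ^ 3 + 2100 * t ^ 2 - 840 * t + 70))

theorem cAB (P X : ℝ × ℝ × ℝ) : cA P X * cB P X = cD P X := by
  unfold cA cB
  rcases le_total 0 (cD P X) with h | h
  · rw [Real.sqrt_eq_zero_of_nonpos (x := -cD P X) (by linarith)]
    simpa using Real.mul_self_sqrt h
  · rw [Real.sqrt_eq_zero_of_nonpos h]
    have := Real.mul_self_sqrt (x := -cD P X) (by linarith)
    linarith

theorem cPath_hasDeriv2 (P X : ℝ × ℝ × ℝ) (t : ℝ) :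
    HasDerivAt (fun s => (cPath P X s).2) (cPath' P X t).2 t := by
  unfold cPath cPath'
  have h := (hasDerivAt_id t)
  have := (((h.mul_const (X.2.1 - P.2.1)).const_add P.2.1).add
    ((((((h.pow 4).const_mul (-350)).add ((h.pow 3).const_mul 700)).sub
      ((h.pow 2).const_mul 420)).add (h.const_mul 70)).const_mul (cB P X)))
  refine HasDerivAt.congr_deriv (f := _) this ?_
  simp only [id]; push_cast; ring

theorem cPath_hasDeriv1 (P X : ℝ × ℝ × ℝ) (t : ℝ) :
    HasDerivAt (fun s => (cPath P X s).1) (cPath' P X t).1 t := by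
  unfold cPath cPath'
  have h := (hasDerivAt_id t)
  have := (((h.mul_const (X.1 - P.1)).const_add P.1).add
    (((((h.pow 3).const_mul (-2)).add ((h.pow 2).const_mul 3)).sub h).const_mul (cA P X)))
  refine HasDerivAt.congr_deriv (f := _) this ?_
  simp only [id]; push_cast; ring

theorem cPath_hasDeriv (P X : ℝ × ℝ × ℝ) (t : ℝ) :
    HasDerivAt (cPath P X) (cPath' P X t) t :=
  (cPath_hasDeriv1 P X t).prodMk (cPath_hasDeriv2 P X t)

theorem cPath_LL (P X : ℝ × ℝ × ℝ) : LocallyLipschitz (cPath P X) := by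
  refine ContDiff.locallyLipschitz (𝕂 := ℝ) ?_
  unfold cPath; fun_prop

theorem cPath_curve (P X : ℝ × ℝ × ℝ) :
    IsCurve 0 1 (cPath P X) (P.1, P.2.1) (X.1, X.2.1) := by
  refine ⟨zero_le_one, cPath_LL P X, ?_, ?_⟩
  · simp [cPath]
  · simp only [cPath]; ext <;> norm_num

theorem cPath_area (P X : ℝ × ℝ × ℝ) : sArea 0 1 (cPath P X) = X.2.2 - P.2.2 := by
  unfold sArea
  simp_rw [(cPath_hasDeriv2 P X _).deriv]
  have key : ∀ t : ℝ, HasDerivAt (fun t : ℝ => P.1 * (X.2.1 - P.2.1) * t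
    + (P.1 * cB P X) * (-350 * t ^ 4 + 700 * t ^ 3 - 420 * t ^ 2 + 70 * t)
    + ((X.1 - P.1) * (X.2.1 - P.2.1) / 2) * t ^ 2
    + ((X.1 - P.1) * cB P X) * (-280 * t ^ 5 + 525 * t ^ 4 - 280 * t ^ 3 + 35 * t ^ 2)
    + (cA P X * (X.2.1 - P.2.1)) * ((-1/2) * t ^ 4 + t ^ 3 - (1/2) * t ^ 2)
    + (cA P X * cB P X) * (400 * t ^ 7 - 1400 * t ^ 6 + 1876 * t ^ 5 - 1190 * t ^ 4
        + 350 * t ^ 3 - 35 * t ^ 2)) ((cPath P X t).1 * (cPath' P X t).2) t := by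
    intro t
    have h := (hasDerivAt_id t)
    have e1 := h.const_mul (P.1 * (X.2.1 - P.2.1))
    have e2 := (((((h.pow 4).const_mul (-350)).add ((h.pow 3).const_mul 700)).sub
      ((h.pow 2).const_mul 420)).add (h.const_mul 70)).const_mul (P.1 * cB P X)
    have e3 := (h.pow 2).const_mul ((X.1 - P.1) * (X.2.1 - P.2.1) / 2)
    have e4 := (((((h.pow 5).const_mul (-280)).add ((h.pow 4).const_mul 525)).sub
      ((h.pow 3).const_mul 280)).add ((h.pow 2).const_mul 35)).const_mul ((X.1 - P.1) * cB P X)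
    have e5 := ((((h.pow 4).const_mul (-1/2)).add (h.pow 3)).sub
      ((h.pow 2).const_mul (1/2))).const_mul (cA P X * (X.2.1 - P.2.1))
    have e6 := (((((((h.pow 7).const_mul 400).sub ((h.pow 6).const_mul 1400)).add
      ((h.pow 5).const_mul 1876)).sub ((h.pow 4).const_mul 1190)).add
      ((h.pow 3).const_mul 350)).sub ((h.pow 2).const_mul 35)).const_mul (cA P X * cB P X)
    refine HasDerivAt.congr_deriv (f := _) (((((e1.add e2).add e3).add e4).add e5).add e6) ?_
    simp [cPath, cPath']; ring
  rw [intervalIntegral.integral_eq_sub_of_hasDerivAt (fun t _ => key t)]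
  · rw [cAB]; unfold cD; norm_num
  · apply Continuous.intervalIntegrable
    unfold cPath cPath'; fun_prop

theorem dCC_tendsto {F : ℝ × ℝ → ℝ} (hF : ∀ p, 0 ≤ F p) (hFc : Continuous F) (P : ℝ × ℝ × ℝ) :
    Tendsto (fun X => dCC F P X) (𝓝 P) (𝓝 0) := by
  have hc : Continuous fun X => ∫ t in (0:ℝ)..1, F (cPath P X t) * enorm2 (cPath' P X t) := by
    apply intervalIntegral.continuous_parametric_intervalIntegral_of_continuous'
    have h1 : Continuous fun q : (ℝ × ℝ × ℝ) × ℝ => cPath P q.1 q.2 := by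
      unfold cPath cA cB cD; fun_prop
    have h2 : Continuous fun q : (ℝ × ℝ × ℝ) × ℝ => cPath' P q.1 q.2 := by
      unfold cPath' cA cB cD; fun_prop
    exact (hFc.comp h1).mul (enorm2_cont.comp h2)
  have h0 := hc.tendsto P
  have e : (∫ t in (0:ℝ)..1, F (cPath P P t) * enorm2 (cPath' P P t)) = 0 := by
    simp [cPath', cA, cB, cD, enorm2]
  rw [e] at h0
  refine squeeze_zero (fun X => dCC_nonneg hF _ _) (fun X => ?_) h0
  have := dCC_le hF (cPath_curve P X) (cPath_area P X)
  unfold degLen at this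
  simpa only [(cPath_hasDeriv P X _).deriv] using this

/-- Near-optimal curves on `[k,k+1]`. -/
theorem near_opt (F : ℝ × ℝ → ℝ) (P Q : ℝ × ℝ × ℝ) (k : ℝ) {ε : ℝ} (hε : 0 < ε) :
    ∃ γ : ℝ → ℝ × ℝ, LocallyLipschitz γ ∧ γ k = (P.1, P.2.1) ∧ γ (k + 1) = (Q.1, Q.2.1) ∧
      sArea k (k + 1) γ = Q.2.2 - P.2.2 ∧ degLen F k (k + 1) γ < dCC F P Q + ε := by
  have hne : { x | ∃ a b γ, IsCurve a b γ (P.1, P.2.1) (Q.1, Q.2.1) ∧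
      sArea a b γ = Q.2.2 - P.2.2 ∧ degLen F a b γ = x }.Nonempty :=
    ⟨_, 0, 1, cPath P Q, cPath_curve P Q, cPath_area P Q, rfl⟩
  obtain ⟨x, ⟨a, b, γ, ⟨hab, hl, ha, hb⟩, hA, rfl⟩, hx⟩ :=
    exists_lt_of_csInf_lt hne (lt_add_of_pos_right (dCC F P Q) hε)
  have e1 : (b - a) * k + (a - (b - a) * k) = a := by ring
  have e2 : (b - a) * (k + 1) + (a - (b - a) * k) = b := by ring
  refine ⟨fun s => γ ((b - a) * s + (a - (b - a) * k)), LL_aff hl _ _, ?_, ?_, ?_, ?_⟩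
  · simp only [e1, ha]
  · simp only [e2, hb]
  · rw [sArea_aff, e1, e2, hA]
  · rw [degLen_aff _ _ (by linarith), e1, e2]; exact hx

theorem chain (F : ℝ × ℝ → ℝ) (x : ℕ → ℝ × ℝ × ℝ) {ε : ℝ} (hε : 0 < ε) (n : ℕ) :
    ∃ γ : ℝ → ℝ × ℝ, LocallyLipschitz γ ∧ (∀ i ≤ n, γ i = ((x i).1, (x i).2.1)) ∧
      ∀ i < n, sArea i (i + 1) γ = (x (i + 1)).2.2 - (x i).2.2 ∧
        degLen F i (i + 1) γ < dCC F (x i) (x (i + 1)) + ε := by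
  induction n with
  | zero =>
    refine ⟨fun _ => ((x 0).1, (x 0).2.1), LocallyLipschitz.const _, ?_, ?_⟩
    · intro i hi; obtain rfl : i = 0 := by omega
      rfl
    · intro i hi; omega
  | succ n ih =>
    obtain ⟨γ, hl, hp, ha⟩ := ih
    obtain ⟨η, hl', h0, h1, hA, hD⟩ := near_opt F (x n) (x (n + 1)) n hε
    have c1 : ∀ t : ℝ, t ≤ n → γ (min t n) + (η (max t n) - η n) = γ t := by
      intro t ht; simp [ht]
    have c2 : ∀ t : ℝ, n ≤ t → γ (min t n) + (η (max t n) - η n) = η t := by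
      intro t ht; simp [ht, h0, hp n le_rfl]
    refine ⟨_, LL_glue hl hl' n, ?_, ?_⟩
    · intro i hi
      rcases Nat.lt_or_ge n i with h | h
      · obtain rfl : i = n + 1 := by omega
        push_cast
        rw [c2 _ (by linarith)]; exact h1
      · rw [c1 _ (by exact_mod_cast h)]; exact hp i h
    · intro i hi
      rcases Nat.lt_or_ge i n with h | h
      · have : (i:ℝ) + 1 ≤ n := by exact_mod_cast h
        rw [sArea_congr (by linarith) fun t ht => c1 t (ht.2.trans this),
          degLen_congr F (by linarith) fun t ht => c1 t (ht.2.trans this)]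
        exact ha i h
      · obtain rfl : i = n := by omega
        rw [sArea_congr (by linarith) fun t ht => c2 t ht.1,
          degLen_congr F (by linarith) fun t ht => c2 t ht.1]
        exact ⟨hA, hD⟩

theorem dCC_triangle {F : ℝ × ℝ → ℝ} (hF : ∀ p, 0 ≤ F p) (hFc : Continuous F)
    (P Q R : ℝ × ℝ × ℝ) : dCC F P R ≤ dCC F P Q + dCC F Q R := by
  refine le_of_forall_pos_le_add fun ε hε => ?_
  obtain ⟨γ, hl, hp, ha⟩ := chain F (fun i => if i = 0 then P else if i = 1 then Q else R)
    (half_pos hε) 2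
  have p0 := hp 0 (by norm_num)
  have p2 := hp 2 (by norm_num)
  obtain ⟨a0, d0⟩ := ha 0 (by norm_num)
  obtain ⟨a1, d1⟩ := ha 1 (by norm_num)
  norm_num at p0 p2 a0 d0 a1 d1
  have := dCC_le hF (P := P) (Q := R) (a := 0) (b := 2) ⟨by norm_num, hl, p0, p2⟩
    (by rw [← sArea_add hl 0 1 2, a0, a1]; ring)
  rw [← degLen_add hFc hl 0 1 2] at this
  linarith


theorem abs_integral_le_aux {f g : ℝ → ℝ} {a b : ℝ} (hab : a ≤ b)
    (h : ∀ᵐ t : ℝ, t ∈ Ioc a b → |f t| ≤ g t) (hg : IntervalIntegrable g volume a b) :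
    |∫ t in a..b, f t| ≤ ∫ t in a..b, g t := by
  have := intervalIntegral.norm_integral_le_of_norm_le (E := ℝ) (f := f) hab h hg
  rwa [Real.norm_eq_abs] at this

theorem hess_lower {W : ℝ × ℝ → ℝ} (hs : ContDiff ℝ (⊤ : ℕ∞) W) (h0 : ∀ p, 0 ≤ W p) {q : ℝ × ℝ}
    (hq : W q = 0) (hh : ∀ v : ℝ × ℝ, v ≠ 0 → 0 < iteratedFDeriv ℝ 2 W q ![v, v]) :
    ∃ c > 0, ∀ᶠ p in 𝓝 q, c * ‖p - q‖ ^ 2 ≤ W p := by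
  have hD0 : fderiv ℝ W q = 0 := by
    apply IsLocalMin.fderiv_eq_zero
    exact Eventually.of_forall fun p => by rw [hq]; exact h0 p
  have hsm : ContDiff ℝ 1 (fderiv ℝ W) := hs.fderiv_right (m := 1) (by norm_cast)
  have hd : Differentiable ℝ W := hs.differentiable (by simp)
  set H := fderiv ℝ (fderiv ℝ W) q with hH
  have hHd : HasFDerivAt (fderiv ℝ W) H q :=
    ((hsm.differentiable (by simp)) q).hasFDerivAt
  have hpos : ∀ v : ℝ × ℝ, v ≠ 0 → 0 < H v v := by
    intro v hv
    have := hh v hv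
    rw [iteratedFDeriv_two_apply] at this
    simpa using this
  have hcomp : IsCompact (Metric.sphere (0 : ℝ × ℝ) 1) := isCompact_sphere _ _
  have hne : (Metric.sphere (0 : ℝ × ℝ) 1).Nonempty := ⟨(1, 0), by simp⟩
  have hcont : Continuous fun v : ℝ × ℝ => H v v := by fun_prop
  obtain ⟨v0, hv0, hmin⟩ := hcomp.exists_isMinOn hne hcont.continuousOn
  set m := H v0 v0 with hm
  have hm0 : 0 < m := hpos v0 (by rintro rfl; simp at hv0)
  have hlow : ∀ v : ℝ × ℝ, m * ‖v‖ ^ 2 ≤ H v v := by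
    intro v
    by_cases hv : v = 0
    · simp [hv]
    have hn : ‖v‖ ≠ 0 := norm_ne_zero_iff.2 hv
    have h1 := hmin (show ‖v‖⁻¹ • v ∈ Metric.sphere (0 : ℝ × ℝ) 1 by
      simp [norm_smul, hn])
    simp only [mem_ofPred_eq, map_smul, smul_apply, smul_eq_mul] at h1
    have h2 : H v v = ‖v‖ ^ 2 * (‖v‖⁻¹ * (‖v‖⁻¹ * H v v)) := by field_simp
    rw [h2, mul_comm]
    exact mul_le_mul_of_nonneg_left h1 (by positivity)
  have hlo := hHd.isLittleO.def (half_pos hm0)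
  rw [hD0] at hlo
  obtain ⟨δ, hδ, hball⟩ := Metric.eventually_nhds_iff.1 hlo
  refine ⟨m / 4, by positivity, Metric.eventually_nhds_iff.2 ⟨δ, hδ, fun p hp => ?_⟩⟩
  set v := p - q with hv
  have hvδ : ‖v‖ < δ := by rwa [hv, ← dist_eq_norm]
  have hder : ∀ s : ℝ, HasDerivAt (fun s : ℝ => W (q + s • v) - m / 4 * ‖v‖ ^ 2 * s ^ 2)
      (fderiv ℝ W (q + s • v) v - m / 4 * ‖v‖ ^ 2 * (2 * s)) s := by
    intro s
    have h1 : HasDerivAt (fun s : ℝ => q + s • v) v s := by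
      simpa using ((hasDerivAt_id s).smul_const v).const_add q
    have h2 := (hd (q + s • v)).hasFDerivAt.comp_hasDerivAt s h1
    have h3 := ((hasDerivAt_pow 2 s).const_mul (m / 4 * ‖v‖ ^ 2))
    refine HasDerivAt.congr_deriv (f := _) (h2.sub h3) ?_
    simp
  have hmono : MonotoneOn (fun s : ℝ => W (q + s • v) - m / 4 * ‖v‖ ^ 2 * s ^ 2) (Icc 0 1) := by
    refine monotoneOn_of_deriv_nonneg (convex_Icc 0 1)
      (fun s _ => (hder s).continuousAt.continuousWithinAt)
      (fun s _ => (hder s).differentiableAt.differentiableWithinAt) ?_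
    intro s hs'
    rw [interior_Icc] at hs'
    rw [(hder s).deriv]
    have hb := @hball (q + s • v) (by
      rw [dist_eq_norm, add_sub_cancel_left, norm_smul, Real.norm_eq_abs, abs_of_pos hs'.1]
      nlinarith [norm_nonneg v, hs'.1, hs'.2])
    rw [add_sub_cancel_left, sub_zero] at hb
    have hb2 := ContinuousLinearMap.le_of_opNorm_le _ hb v
    rw [Real.norm_eq_abs, norm_smul, Real.norm_eq_abs, abs_of_pos hs'.1] at hb2
    simp only [sub_apply, map_smul, smul_apply,
      smul_eq_mul] at hb2
    have hb3 := (abs_le.1 hb2).1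
    have h5 := mul_le_mul_of_nonneg_left (hlow v) hs'.1.le
    nlinarith
  have := hmono (left_mem_Icc.2 zero_le_one) (right_mem_Icc.2 zero_le_one) zero_le_one
  simp only [zero_smul, add_zero, one_smul, hq] at this
  rw [show q + v = p by simp [hv]] at this
  linarith

theorem lam_bound {W : ℝ × ℝ → ℝ} {pm pp : ℝ × ℝ} (hW : TwoWell W pm pp) {lam : ℝ × ℝ → ℝ}
    (hc : Continuous lam) {A : ℝ} (hA0 : 0 ≤ A) (h1 : ∀ p, |lam p| ≤ A * ‖p - pm‖)
    (h2 : ∀ p, |lam p| ≤ A * ‖p - pp‖) (R : ℝ) :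
    ∃ C : ℝ, 0 ≤ C ∧ ∀ p ∈ Metric.closedBall (0 : ℝ × ℝ) R, |lam p| ≤ C * Real.sqrt (W p) := by
  refine IsCompact.induction_on (p := fun s => ∃ C : ℝ, 0 ≤ C ∧
    ∀ p ∈ s, |lam p| ≤ C * Real.sqrt (W p)) (isCompact_closedBall _ _) ⟨0, le_rfl, by simp⟩ ?_ ?_ ?_
  · rintro s t hst ⟨C, hC, h⟩; exact ⟨C, hC, fun p hp => h p (hst hp)⟩
  · rintro s t ⟨C, hC, h⟩ ⟨C', hC', h'⟩
    refine ⟨max C C', le_max_of_le_left hC, ?_⟩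
    rintro p (hp | hp)
    · exact (h p hp).trans (by gcongr; exact le_max_left _ _)
    · exact (h' p hp).trans (by gcongr; exact le_max_right _ _)
  · intro q _
    have well : ∀ q : ℝ × ℝ, W q = 0 →
        (∀ v : ℝ × ℝ, v ≠ 0 → 0 < iteratedFDeriv ℝ 2 W q ![v, v]) →
        (∀ p, |lam p| ≤ A * ‖p - q‖) → ∃ t ∈ 𝓝 q, ∃ C : ℝ, 0 ≤ C ∧
          ∀ p ∈ t, |lam p| ≤ C * Real.sqrt (W p) := by
      intro q hq hh hl
      obtain ⟨c, hc, hev⟩ := hess_lower hW.smooth hW.nonneg hq hh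
      refine ⟨_, hev, A / Real.sqrt c, by positivity, fun p hp => ?_⟩
      have hp' : c * ‖p - q‖ ^ 2 ≤ W p := hp
      have h3 := Real.sqrt_le_sqrt hp'
      rw [Real.sqrt_mul hc.le, Real.sqrt_sq (norm_nonneg _)] at h3
      have hsc : 0 < Real.sqrt c := Real.sqrt_pos.2 hc
      calc |lam p| ≤ A * ‖p - q‖ := hl p
        _ = A / Real.sqrt c * (Real.sqrt c * ‖p - q‖) := by field_simp
        _ ≤ _ := by gcongr
    by_cases hm : q = pm
    · obtain ⟨t, ht, h⟩ := well pm ((hW.zeroSet pm).2 (Or.inl rfl)) hW.hess_m h1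
      exact ⟨t, mem_nhdsWithin_of_mem_nhds (hm ▸ ht), h⟩
    by_cases hp : q = pp
    · obtain ⟨t, ht, h⟩ := well pp ((hW.zeroSet pp).2 (Or.inr rfl)) hW.hess_p h2
      exact ⟨t, mem_nhdsWithin_of_mem_nhds (hp ▸ ht), h⟩
    have hpos : 0 < W q := lt_of_le_of_ne (hW.nonneg q) fun h => by
      rcases (hW.zeroSet q).1 h.symm with h | h
      · exact hm h
      · exact hp h
    have hs0 : 0 < Real.sqrt (W q) := Real.sqrt_pos.2 hpos
    have hcF : Continuous fun p => Real.sqrt (W p) := hW.smooth.continuous.sqrt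
    have e1 : ∀ᶠ p in 𝓝 q, Real.sqrt (W q) / 2 < Real.sqrt (W p) :=
      hcF.continuousAt.eventually (lt_mem_nhds (by linarith))
    have e2 : ∀ᶠ p in 𝓝 q, |lam p| < |lam q| + 1 :=
      hc.abs.continuousAt.eventually (gt_mem_nhds (by simp))
    refine ⟨_, mem_nhdsWithin_of_mem_nhds (e1.and e2),
      (|lam q| + 1) / (Real.sqrt (W q) / 2), by positivity, ?_⟩
    rintro p ⟨hp1, hp2⟩
    calc |lam p| ≤ |lam q| + 1 := hp2.le
      _ = (|lam q| + 1) / (Real.sqrt (W q) / 2) * (Real.sqrt (W q) / 2) := by field_simp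
      _ ≤ _ := by gcongr

theorem planar_bound {W : ℝ × ℝ → ℝ} {pm pp : ℝ × ℝ} (hW : TwoWell W pm pp) (p : ℝ × ℝ) (M : ℝ) :
    ∃ R : ℝ, ∀ (γ : ℝ → ℝ × ℝ) (a b : ℝ), a ≤ b → LocallyLipschitz γ → γ a = p →
      degLen (fun p => Real.sqrt (W p)) a b γ ≤ M → ∀ t ∈ Icc a b, ‖γ t‖ ≤ R := by
  obtain ⟨c, hc, R, hR⟩ := hW.coercive
  have hcF : Continuous fun p => Real.sqrt (W p) := hW.smooth.continuous.sqrt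
  have hF0 : ∀ p, 0 ≤ (fun p => Real.sqrt (W p)) p := fun p => Real.sqrt_nonneg _
  have hsc : 0 < Real.sqrt c := Real.sqrt_pos.2 hc
  refine ⟨max R ‖p‖ + (Real.sqrt c)⁻¹ * |M|, fun γ a b hab hl ha hM t ht => ?_⟩
  by_cases hle : ‖γ t‖ ≤ max R ‖p‖
  · have : 0 ≤ (Real.sqrt c)⁻¹ * |M| := by positivity
    linarith
  push Not at hle
  have hcomp : IsCompact (Icc a t ∩ {s | ‖γ s‖ ≤ max R ‖p‖}) :=
    isCompact_Icc.inter_right (isClosed_le hl.continuous.norm continuous_const)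
  obtain ⟨s, ⟨⟨has, hst⟩, hs⟩, hgr⟩ := hcomp.exists_isGreatest
    ⟨a, left_mem_Icc.2 ht.1, by simp [ha]⟩
  have hs : ‖γ s‖ ≤ max R ‖p‖ := hs
  have hbig : ∀ u ∈ Ioc s t, Real.sqrt c ≤ Real.sqrt (W (γ u)) := by
    intro u hu
    apply Real.sqrt_le_sqrt
    apply hR
    by_contra hcon
    push Not at hcon
    have := hgr ⟨⟨has.trans hu.1.le, hu.2⟩, (hcon.le.trans (le_max_left _ _) : ‖γ u‖ ≤ _)⟩
    exact absurd hu.1 (not_lt.2 this)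
  have hint := (deg_int hcF hl s t).const_mul (Real.sqrt c)⁻¹
  have hdl : degLen (fun p => Real.sqrt (W p)) s t γ ≤ M := by
    have e1 := degLen_add hcF hl a s b
    have e2 := degLen_add hcF hl s t b
    have := degLen_nonneg hF0 has γ
    have := degLen_nonneg hF0 ht.2 γ
    linarith
  have hcore : (∫ u in s..t, (Real.sqrt c)⁻¹ * (Real.sqrt (W (γ u)) * enorm2 (deriv γ u)))
      ≤ (Real.sqrt c)⁻¹ * |M| := by
    rw [intervalIntegral.integral_const_mul]
    exact mul_le_mul_of_nonneg_left (hdl.trans (le_abs_self M)) (by positivity)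
  have hpt : ∀ u ∈ Ioc s t, enorm2 (deriv γ u) ≤
      (Real.sqrt c)⁻¹ * (Real.sqrt (W (γ u)) * enorm2 (deriv γ u)) := by
    intro u hu
    have h1 := hbig u hu
    rw [← mul_assoc]
    refine le_mul_of_one_le_left (enorm2_nonneg _) ?_
    rw [inv_mul_eq_div, le_div_iff₀ hsc]; linarith
  have hae := LL_ae_diff hl s t
  have h1 : |(γ t).1 - (γ s).1| ≤ (Real.sqrt c)⁻¹ * |M| := by
    rw [← LL_ftc (LL_fst hl) s t]
    refine le_trans (abs_integral_le_aux hst ?_ hint) hcore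
    filter_upwards [hae] with u hu hu2
    rw [deriv_fst (hu (uIoc_subset_uIcc (by rwa [uIoc_of_le hst])))]
    exact (fst_le_enorm2 _).trans (hpt u hu2)
  have h2 : |(γ t).2 - (γ s).2| ≤ (Real.sqrt c)⁻¹ * |M| := by
    rw [← LL_ftc (LL_snd hl) s t]
    refine le_trans (abs_integral_le_aux hst ?_ hint) hcore
    filter_upwards [hae] with u hu hu2
    rw [deriv_snd (hu (uIoc_subset_uIcc (by rwa [uIoc_of_le hst])))]
    exact (snd_le_enorm2 _).trans (hpt u hu2)
  have h3 : ‖γ t - γ s‖ ≤ (Real.sqrt c)⁻¹ * |M| := by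
    rw [Prod.norm_def]; exact max_le h1 h2
  have := norm_le_norm_add_norm_sub' (γ t) (γ s)
  linarith

theorem lift_bound {W : ℝ × ℝ → ℝ} {pm pp : ℝ × ℝ} (hW : TwoWell W pm pp) (p : ℝ × ℝ) (z M : ℝ) :
    ∃ R : ℝ, ∀ (γ : ℝ → ℝ × ℝ) (a b : ℝ), a ≤ b → LocallyLipschitz γ → γ a = p →
      degLen (fun p => Real.sqrt (W p)) a b γ ≤ M → ∀ t ∈ Icc a b, ‖liftC z a γ t‖ ≤ R := by
  obtain ⟨R, hR⟩ := planar_bound hW p M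
  have hcF : Continuous fun p => Real.sqrt (W p) := hW.smooth.continuous.sqrt
  have hF0 : ∀ p, 0 ≤ (fun p => Real.sqrt (W p)) p := fun p => Real.sqrt_nonneg _
  obtain ⟨n1, hn1⟩ : ∃ x, x = pp.2 - pm.2 := ⟨_, rfl⟩
  obtain ⟨n2, hn2⟩ : ∃ x, x = pm.1 - pp.1 := ⟨_, rfl⟩
  have hN : 0 < n1 ^ 2 + n2 ^ 2 := by
    rcases eq_or_ne n1 0 with h | h
    · have : n2 ≠ 0 := by
        intro h'
        exact hW.wells_ne (Prod.ext (by linarith) (by linarith))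
      positivity
    · positivity
  set lam : ℝ × ℝ → ℝ := fun q => n1 * (q.1 - pm.1) + n2 * (q.2 - pm.2) with hlam
  set g : ℝ × ℝ → ℝ := fun q => n2 ^ 2 * (q.1 * (q.2 - pm.2)) + n1 ^ 2 * pm.1 * q.2
    - n1 * n2 * (q.2 - pm.2) ^ 2 / 2 + n1 * n2 * (q.1 - pm.1) ^ 2 / 2 with hg
  have lin : ∀ v : ℝ × ℝ, |n1 * v.1 + n2 * v.2| ≤ (|n1| + |n2|) * ‖v‖ := by
    intro v
    have h1 : |v.1| ≤ ‖v‖ := norm_fst_le v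
    have h2 : |v.2| ≤ ‖v‖ := norm_snd_le v
    calc _ ≤ |n1 * v.1| + |n2 * v.2| := abs_add_le _ _
      _ = |n1| * |v.1| + |n2| * |v.2| := by rw [abs_mul, abs_mul]
      _ ≤ |n1| * ‖v‖ + |n2| * ‖v‖ := by gcongr
      _ = _ := by ring
  obtain ⟨C, hC0, hC⟩ := lam_bound hW (lam := lam) (by fun_prop) (A := |n1| + |n2|) (by positivity)
    (fun q => lin (q - pm)) (fun q => by
      have := lin (q - pp)
      have e : n1 * (q - pp).1 + n2 * (q - pp).2 = lam q := by
        simp only [hlam, Prod.fst_sub, Prod.snd_sub, hn1, hn2]; ring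
      rwa [e] at this) R
  have hgs : ContDiff ℝ 1 g := by fun_prop
  obtain ⟨B, hB⟩ := (isCompact_closedBall (0 : ℝ × ℝ) R).exists_bound_of_continuousOn
    hgs.continuous.continuousOn
  refine ⟨max R (|z| + (n1 ^ 2 + n2 ^ 2)⁻¹ * ((|n1| + |n2|) * C * |M| + 2 * B)),
    fun γ a b hab hl ha hM t ht => ?_⟩
  have hRt : ∀ s ∈ Icc a t, γ s ∈ Metric.closedBall (0 : ℝ × ℝ) R := fun s hs => by
    simpa using hR γ a b hab hl ha hM s ⟨hs.1, hs.2.trans ht.2⟩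
  have hdl : degLen (fun p => Real.sqrt (W p)) a t γ ≤ |M| := by
    have e1 := degLen_add hcF hl a t b
    have := degLen_nonneg hF0 ht.2 γ
    linarith [le_abs_self M]
  have hgl : LocallyLipschitz fun s => g (γ s) := hgs.locallyLipschitz.comp hl
  have hftc := LL_ftc hgl a t
  have hkey : |∫ s in a..t, ((n1 ^ 2 + n2 ^ 2) * ((γ s).1 * deriv (fun s => (γ s).2) s)
      - deriv (fun s => g (γ s)) s)| ≤ (|n1| + |n2|) * C * |M| := by
    have hint := (deg_int hcF hl a t).const_mul ((|n1| + |n2|) * C)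
    refine (abs_integral_le_aux ht.1 ?_ hint).trans ?_
    · filter_upwards [LL_ae_diff hl a t] with s hs hs2
      have hd := hs (uIoc_subset_uIcc (by rwa [uIoc_of_le ht.1]))
      have h1 : HasDerivAt (fun s => (γ s).1) (deriv γ s).1 s :=
        ((hasFDerivAt_fst (𝕜 := ℝ) (p := γ s)).comp_hasDerivAt s hd.hasDerivAt)
      have h2 : HasDerivAt (fun s => (γ s).2) (deriv γ s).2 s :=
        ((hasFDerivAt_snd (𝕜 := ℝ) (p := γ s)).comp_hasDerivAt s hd.hasDerivAt)
      have h3 := ((((h1.mul (h2.sub_const pm.2)).const_mul (n2 ^ 2)).add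
        (h2.const_mul (n1 ^ 2 * pm.1))).sub
        ((((h2.sub_const pm.2).pow 2).const_mul (n1 * n2)).div_const 2)).add
        ((((h1.sub_const pm.1).pow 2).const_mul (n1 * n2)).div_const 2)
      have h4 : deriv (fun s => g (γ s)) s = _ := h3.deriv
      rw [h4, deriv_snd hd]
      have h5 : (n1 ^ 2 + n2 ^ 2) * ((γ s).1 * (deriv γ s).2) -
          (n2 ^ 2 * ((deriv γ s).1 * ((γ s).2 - pm.2) + (γ s).1 * (deriv γ s).2) +
            n1 ^ 2 * pm.1 * (deriv γ s).2 -
            n1 * n2 * (((2 : ℕ) : ℝ) * ((γ s).2 - pm.2) ^ (2 - 1) * (deriv γ s).2) / 2 +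
            n1 * n2 * (((2 : ℕ) : ℝ) * ((γ s).1 - pm.1) ^ (2 - 1) * (deriv γ s).1) / 2) =
          lam (γ s) * (n1 * (deriv γ s).2 - n2 * (deriv γ s).1) := by
        simp only [hlam]; push_cast; ring
      refine (congrArg abs h5).le.trans ?_
      rw [abs_mul]
      have h6 : |lam (γ s)| ≤ C * Real.sqrt (W (γ s)) := hC _ (hRt s ⟨hs2.1.le, hs2.2⟩)
      have h7 : |n1 * (deriv γ s).2 - n2 * (deriv γ s).1| ≤ (|n1| + |n2|) * enorm2 (deriv γ s) := by
        calc _ ≤ |n1 * (deriv γ s).2| + |n2 * (deriv γ s).1| := abs_sub _ _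
          _ = |n1| * |(deriv γ s).2| + |n2| * |(deriv γ s).1| := by rw [abs_mul, abs_mul]
          _ ≤ |n1| * enorm2 (deriv γ s) + |n2| * enorm2 (deriv γ s) := by
            gcongr
            · exact snd_le_enorm2 _
            · exact fst_le_enorm2 _
          _ = _ := by ring
      calc |lam (γ s)| * |n1 * (deriv γ s).2 - n2 * (deriv γ s).1|
          ≤ (C * Real.sqrt (W (γ s))) * ((|n1| + |n2|) * enorm2 (deriv γ s)) := by gcongr
        _ = _ := by ring
    · rw [intervalIntegral.integral_const_mul]
      exact mul_le_mul_of_nonneg_left hdl (by positivity)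
  rw [intervalIntegral.integral_sub ((area_int hl a t).const_mul _) (LL_deriv_int hgl a t),
    intervalIntegral.integral_const_mul, hftc] at hkey
  have hb1 := hB _ (hRt t (right_mem_Icc.2 ht.1))
  have hb2 := hB _ (hRt a (left_mem_Icc.2 ht.1))
  have hA : |sArea a t γ| ≤ (n1 ^ 2 + n2 ^ 2)⁻¹ * ((|n1| + |n2|) * C * |M| + 2 * B) := by
    rw [inv_mul_eq_div, le_div_iff₀ hN]
    change |(n1 ^ 2 + n2 ^ 2) * sArea a t γ - (g (γ t) - g (γ a))| ≤ _ at hkey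
    rw [Real.norm_eq_abs] at hb1 hb2
    rw [← abs_of_pos hN, ← abs_mul]
    rw [abs_le] at *
    constructor <;> linarith [hkey.1, hkey.2, hb1.1, hb1.2, hb2.1, hb2.2]
  have hR' := hRt t (right_mem_Icc.2 ht.1)
  rw [mem_closedBall_zero_iff] at hR'
  refine norm_prod_le_iff.2 ⟨?_, norm_prod_le_iff.2 ⟨?_, ?_⟩⟩
  · exact ((norm_fst_le (γ t)).trans hR').trans (le_max_left _ _)
  · exact ((norm_snd_le (γ t)).trans hR').trans (le_max_left _ _)
  · refine le_trans ?_ (le_max_right _ _)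
    exact (abs_add_le _ _).trans (by linarith)


theorem geo_exists {W : ℝ × ℝ → ℝ} {pm pp : ℝ × ℝ} (hW : TwoWell W pm pp)
    {F : ℝ × ℝ → ℝ} (hF : F = fun p => Real.sqrt (W p)) (P Q : ℝ × ℝ × ℝ) :
    ∃ Γ : ℝ → ℝ × ℝ × ℝ, Γ 0 = P ∧ Γ 1 = Q ∧ ∀ s ∈ Set.Icc (0:ℝ) 1, ∀ t ∈ Set.Icc (0:ℝ) 1,
        dCC F (Γ s) (Γ t) ≤ dCC F P Q * |s - t| := by
  have hF0 : ∀ p, 0 ≤ F p := fun p => by rw [hF]; exact Real.sqrt_nonneg _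
  have hFc : Continuous F := by rw [hF]; exact hW.smooth.continuous.sqrt
  have hn : ∀ n : ℕ, ∃ γ : ℝ → ℝ × ℝ, LocallyLipschitz γ ∧ γ 0 = (P.1, P.2.1) ∧
      γ 1 = (Q.1, Q.2.1) ∧ sArea 0 1 γ = Q.2.2 - P.2.2 ∧
      degLen F 0 1 γ < dCC F P Q + 1 / ((n : ℝ) + 1) := by
    intro n
    have := near_opt F P Q 0 (ε := 1 / ((n : ℝ) + 1)) (by positivity)
    simpa only [zero_add] using this
  choose γ hl g0 g1 hA hE using hn
  have hElo : ∀ n, dCC F P Q ≤ degLen F 0 1 (γ n) := fun n =>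
    dCC_le hF0 ⟨zero_le_one, hl n, g0 n, g1 n⟩ (hA n)
  obtain ⟨R, hR⟩ := lift_bound hW (P.1, P.2.1) P.2.2 (dCC F P Q + 1)
  rw [← hF] at hR
  have hbd : ∀ n, ∀ t ∈ Icc (0:ℝ) 1, ‖liftC P.2.2 0 (γ n) t‖ ≤ R := by
    intro n
    refine hR (γ n) 0 1 zero_le_one (hl n) (g0 n) ((hE n).le.trans ?_)
    have : 1 / ((n : ℝ) + 1) ≤ 1 := by
      rw [div_le_one (by positivity)]; linarith [(Nat.cast_nonneg n : (0:ℝ) ≤ n)]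
    linarith
  have htau : ∀ (n : ℕ) (s : ℝ), ∃ τ : ℝ, s ∈ Icc (0:ℝ) 1 → (τ ∈ Icc (0:ℝ) 1 ∧
      degLen F 0 τ (γ n) = s * degLen F 0 1 (γ n)) ∧ (s = 0 → τ = 0) ∧ (s = 1 → τ = 1) := by
    intro n s
    by_cases h0 : s = 0
    · exact ⟨0, fun _ => ⟨⟨by simp, by simp [h0, degLen]⟩, fun _ => rfl, fun h => by linarith⟩⟩
    by_cases h1 : s = 1
    · exact ⟨1, fun _ => ⟨⟨by simp, by simp [h1]⟩, fun h => by linarith, fun _ => rfl⟩⟩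
    by_cases hs : s ∈ Icc (0:ℝ) 1
    · have hc : Continuous fun t => degLen F 0 t (γ n) :=
        intervalIntegral.continuous_primitive (deg_int hFc (hl n)) 0
      have hE0 := degLen_nonneg hF0 zero_le_one (γ n)
      obtain ⟨τ, hτ, he⟩ := intermediate_value_Icc (zero_le_one (α := ℝ)) hc.continuousOn
        (show s * degLen F 0 1 (γ n) ∈ Icc (degLen F 0 0 (γ n)) (degLen F 0 1 (γ n)) by
          constructor
          · have : degLen F 0 0 (γ n) = 0 := by simp [degLen]
            rw [this]; exact mul_nonneg hs.1 hE0
          · exact mul_le_of_le_one_left hE0 hs.2)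
      exact ⟨τ, fun _ => ⟨⟨hτ, he⟩, fun h => absurd h h0, fun h => absurd h h1⟩⟩
    · exact ⟨0, fun h => absurd h hs⟩
  choose τ hτ using htau
  have hlip : ∀ n, ∀ s ∈ Icc (0:ℝ) 1, ∀ t ∈ Icc (0:ℝ) 1,
      dCC F (liftC P.2.2 0 (γ n) (τ n s)) (liftC P.2.2 0 (γ n) (τ n t)) ≤
        degLen F 0 1 (γ n) * |s - t| := by
    have aux : ∀ n, ∀ s ∈ Icc (0:ℝ) 1, ∀ t ∈ Icc (0:ℝ) 1, τ n s ≤ τ n t →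
      dCC F (liftC P.2.2 0 (γ n) (τ n s)) (liftC P.2.2 0 (γ n) (τ n t)) ≤
        degLen F 0 1 (γ n) * |s - t| := by
      intro n s hs t ht hle
      refine (dCC_lift_le hF0 (hl n) _ _ hle).trans ?_
      have e := degLen_add hFc (hl n) 0 (τ n s) (τ n t)
      rw [(hτ n s hs).1.2, (hτ n t ht).1.2] at e
      have hE0 := degLen_nonneg hF0 zero_le_one (γ n)
      have := mul_le_mul_of_nonneg_left (neg_le_abs (s - t)) hE0
      linarith
    intro n s hs t ht
    rcases le_total (τ n s) (τ n t) with h | h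
    · exact aux n s hs t ht h
    · rw [dCC_symm_le, abs_sub_comm]; exact aux n t ht s hs h
  have hlim : ∀ s : ℝ, ∃ x : ℝ × ℝ × ℝ, s ∈ Icc (0:ℝ) 1 →
      Tendsto (fun n => liftC P.2.2 0 (γ n) (τ n s)) (hyperfilter ℕ : Filter ℕ) (𝓝 x) := by
    intro s
    by_cases hs : s ∈ Icc (0:ℝ) 1
    · obtain ⟨x, -, hx⟩ := (isCompact_closedBall (0 : ℝ × ℝ × ℝ) R).ultrafilter_le_nhds
        ((hyperfilter ℕ).map fun n => liftC P.2.2 0 (γ n) (τ n s)) (by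
          rw [le_principal_iff]
          exact Filter.Eventually.of_forall (f := (hyperfilter ℕ : Filter ℕ)) fun n => by
            simpa using hbd n _ (hτ n s hs).1.1)
      exact ⟨x, fun _ => hx⟩
    · exact ⟨0, fun h => absurd h hs⟩
  choose Γ hΓ using hlim
  have m0 : (0:ℝ) ∈ Icc (0:ℝ) 1 := by simp
  have m1 : (1:ℝ) ∈ Icc (0:ℝ) 1 := by simp
  refine ⟨Γ, ?_, ?_, ?_⟩
  · refine tendsto_nhds_unique (hΓ 0 m0) ?_
    have : (fun n => liftC P.2.2 0 (γ n) (τ n 0)) = fun _ => P := by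
      ext1 n; rw [(hτ n 0 m0).2.1 rfl]; simp [liftC, g0, sArea]
    rw [this]; exact tendsto_const_nhds
  · refine tendsto_nhds_unique (hΓ 1 m1) ?_
    have : (fun n => liftC P.2.2 0 (γ n) (τ n 1)) = fun _ => Q := by
      ext1 n; rw [(hτ n 1 m1).2.2 rfl]; simp [liftC, g1, hA]
    rw [this]; exact tendsto_const_nhds
  · intro s hs t ht
    have a1 := (dCC_tendsto hF0 hFc (Γ s)).comp (hΓ s hs)
    have a2 := (dCC_tendsto hF0 hFc (Γ t)).comp (hΓ t ht)
    have a3 : Tendsto (fun n => degLen F 0 1 (γ n)) atTop (𝓝 (dCC F P Q)) := by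
      refine tendsto_of_tendsto_of_tendsto_of_le_of_le tendsto_const_nhds ?_ hElo
        (fun n => (hE n).le)
      simpa using tendsto_one_div_add_atTop_nhds_zero_nat.const_add (dCC F P Q)
    have a4 := (a3.mono_left Nat.hyperfilter_le_atTop).mul_const |s - t|
    have a5 := (a1.add a4).add a2
    rw [zero_add, add_zero] at a5
    refine ge_of_tendsto a5 (Eventually.of_forall fun n => ?_)
    have b1 := dCC_triangle hF0 hFc (Γ s) (liftC P.2.2 0 (γ n) (τ n s)) (Γ t)
    have b2 := dCC_triangle hF0 hFc (liftC P.2.2 0 (γ n) (τ n s))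
      (liftC P.2.2 0 (γ n) (τ n t)) (Γ t)
    have b3 := hlip n s hs t ht
    have b4 := dCC_symm_le (F := F) (liftC P.2.2 0 (γ n) (τ n t)) (Γ t)
    simp only [Function.comp]
    linarith

theorem fin_telescope (n : ℕ) (t : Fin (n + 1) → ℝ) :
    ∑ i : Fin n, (t i.succ - t i.castSucc) = t (Fin.last n) - t 0 := by
  induction n with
  | zero => simp
  | succ n ih =>
    rw [Fin.sum_univ_castSucc]
    have := ih (fun i => t i.castSucc)
    simp only [Fin.succ_castSucc] at *
    rw [this, Fin.succ_last]
    simp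

theorem pathLen_eq {F : ℝ × ℝ → ℝ} {P Q : ℝ × ℝ × ℝ} {Γ : ℝ → ℝ × ℝ × ℝ} (h0 : Γ 0 = P)
    (h1 : Γ 1 = Q) (hL : ∀ s ∈ Set.Icc (0:ℝ) 1, ∀ t ∈ Set.Icc (0:ℝ) 1,
        dCC F (Γ s) (Γ t) ≤ dCC F P Q * |s - t|) : pathLen F 0 1 Γ = dCC F P Q := by
  refine IsGreatest.csSup_eq ⟨⟨1, ![0, 1], ?_, by simp, by simp [Fin.last], by simp [h0, h1]⟩, ?_⟩
  · rw [Fin.monotone_iff_le_succ]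
    intro i; fin_cases i; simp
  · rintro x ⟨n, t, hm, ht0, ht1, rfl⟩
    have hmem : ∀ i, t i ∈ Icc (0:ℝ) 1 := fun i =>
      ⟨ht0 ▸ hm (Fin.zero_le i), ht1 ▸ hm (Fin.le_last i)⟩
    calc _ ≤ ∑ i : Fin n, dCC F P Q * (t i.succ - t i.castSucc) := by
          refine Finset.sum_le_sum fun i _ => (hL _ (hmem _) _ (hmem _)).trans_eq ?_
          rw [abs_sub_comm, abs_of_nonneg (sub_nonneg.2 (hm (Fin.castSucc_lt_succ).le))]
      _ = _ := by rw [← Finset.mul_sum, fin_telescope, ht0, ht1]; ring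

theorem approx {F : ℝ × ℝ → ℝ} (hF0 : ∀ p, 0 ≤ F p) (hFc : Continuous F)
    {P Q : ℝ × ℝ × ℝ} {Γ : ℝ → ℝ × ℝ × ℝ} (h0 : Γ 0 = P)
    (h1 : Γ 1 = Q) (hL : ∀ s ∈ Set.Icc (0:ℝ) 1, ∀ t ∈ Set.Icc (0:ℝ) 1,
        dCC F (Γ s) (Γ t) ≤ dCC F P Q * |s - t|) (j : ℕ) :
    ∃ Γj : ℝ → ℝ × ℝ × ℝ, LocallyLipschitz Γj ∧ Admissible 0 1 Γj ∧ Γj 0 = P ∧ Γj 1 = Q ∧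
      dCC F P Q ≤ degLen F 0 1 (projCurve Γj) ∧
      degLen F 0 1 (projCurve Γj) ≤ dCC F P Q + 1 / ((j : ℝ) + 1) ∧
      ∀ t ∈ Icc (0:ℝ) 1, dCC F (Γj t) (Γ t) ≤ (2 * dCC F P Q + 1) * (1 / ((j : ℝ) + 1)) := by
  obtain ⟨D, hD⟩ : ∃ D, D = dCC F P Q := ⟨_, rfl⟩
  have hD0 : 0 ≤ D := hD ▸ dCC_nonneg hF0 P Q
  obtain ⟨N, hN⟩ : ∃ N : ℝ, N = (j : ℝ) + 1 := ⟨_, rfl⟩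
  have hj0 : (0:ℝ) ≤ j := Nat.cast_nonneg j
  have hN1 : 1 ≤ N := by linarith
  have hNp : 0 < N := by linarith
  rw [← hN, ← hD]
  rw [← hD] at hL
  obtain ⟨γ, hl, hp, ha⟩ := chain F (fun i => Γ (i / N)) (ε := 1 / N ^ 2) (by positivity) (j + 1)
  have hmem : ∀ i : ℕ, i ≤ j + 1 → (i : ℝ) / N ∈ Icc (0:ℝ) 1 := by
    intro i hi
    refine ⟨by positivity, (div_le_one hNp).2 ?_⟩
    rw [hN]; exact_mod_cast hi
  have hpiece : ∀ i < j + 1, degLen F i (i + 1) γ ≤ D / N + 1 / N ^ 2 := by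
    intro i hi
    refine (ha i hi).2.le.trans ?_
    have := hL _ (hmem i hi.le) _ (hmem (i + 1) hi)
    have e : |(i:ℝ) / N - ((i + 1 : ℕ) : ℝ) / N| = 1 / N := by
      rw [abs_sub_comm, ← sub_div]
      push_cast
      rw [add_sub_cancel_left, abs_of_pos (by positivity)]
    rw [e] at this
    have e2 : D * (1 / N) = D / N := by ring
    linarith
  have harea : ∀ i ≤ j + 1, sArea 0 i γ = (Γ (i / N)).2.2 - P.2.2 := by
    intro i
    induction i with
    | zero => intro _; simp [sArea, h0]
    | succ i ih =>
      intro hi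
      have e := sArea_add hl 0 i (i + 1)
      rw [ih (by omega), (ha i (by omega)).1] at e
      push_cast at e ⊢
      rw [← e]; ring
  have hdeg : ∀ i : ℕ, i ≤ j + 1 → degLen F 0 i γ ≤ i * (D / N + 1 / N ^ 2) := by
    intro i
    induction i with
    | zero => intro _; simp [degLen]
    | succ i ih =>
      intro hi
      have e := degLen_add hFc hl 0 i (i + 1)
      have e1 := ih (by omega)
      have e2 := hpiece i (by omega)
      push_cast
      linarith
  have hlift : ∀ i ≤ j + 1, liftC P.2.2 0 γ i = Γ (i / N) := by
    intro i hi
    simp only [liftC, harea i hi, hp i hi]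
    ext <;> simp
  have hNj : N = ((j + 1 : ℕ) : ℝ) := by rw [hN]; push_cast; rfl
  have hseq : ∀ t, liftC P.2.2 0 (fun s => γ (N * s + 0)) t = liftC P.2.2 0 γ (N * t) := by
    intro t
    simp only [liftC, sArea_aff]
    simp
  have hproj : projCurve (liftC P.2.2 0 (fun s => γ (N * s + 0))) = fun s => γ (N * s + 0) := rfl
  have hs0 : liftC P.2.2 0 (fun s => γ (N * s + 0)) 0 = P := by
    rw [hseq]; simpa [h0] using hlift 0 (by omega)
  have hs1 : liftC P.2.2 0 (fun s => γ (N * s + 0)) 1 = Q := by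
    rw [hseq, mul_one]
    have := hlift (j + 1) le_rfl
    rw [← hNj, div_self hNp.ne', h1] at this
    exact this
  refine ⟨liftC P.2.2 0 (fun s => γ (N * s + 0)), LL_lift (LL_aff hl _ _) _ _,
    adm_lift (LL_aff hl _ _) _ _ _, hs0, hs1, ?_, ?_, ?_⟩
  · rw [hproj, hD]
    have := dCC_lift_le hF0 (LL_aff hl N 0) P.2.2 0 (zero_le_one (α := ℝ))
    rwa [hs0, hs1] at this
  · rw [hproj, degLen_aff F γ hNp.le]
    have := hdeg (j + 1) le_rfl
    rw [← hNj] at this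
    have e : N * (D / N + 1 / N ^ 2) = D + 1 / N := by field_simp
    rw [e] at this
    simpa only [mul_zero, mul_one, add_zero] using this
  · intro t ht
    rw [hseq]
    obtain ⟨i, hi, hi1, hi2⟩ : ∃ i : ℕ, i < j + 1 ∧ (i : ℝ) ≤ N * t ∧ N * t ≤ i + 1 := by
      have hNt : 0 ≤ N * t := mul_nonneg hNp.le ht.1
      rcases Nat.lt_or_ge ⌊N * t⌋₊ (j + 1) with h | h
      · exact ⟨_, h, Nat.floor_le hNt, (Nat.lt_floor_add_one _).le⟩
      · refine ⟨j, by omega, ?_, ?_⟩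
        · have h3 : ((j + 1 : ℕ) : ℝ) ≤ N * t := (Nat.cast_le.2 h).trans (Nat.floor_le hNt)
          push_cast at h3; linarith
        · rw [← hN]; exact mul_le_of_le_one_right hNp.le ht.2
    have b1 := dCC_triangle hF0 hFc (liftC P.2.2 0 γ (N * t)) (Γ (i / N)) (Γ t)
    have b2 := dCC_lift_le hF0 hl P.2.2 0 hi1
    rw [hlift i hi.le, dCC_symm_le] at b2
    have b3 := degLen_add hFc hl i (N * t) (i + 1)
    have b4 := degLen_nonneg hF0 hi2 γ
    have b5 := hpiece i hi
    have b6 := hL _ (hmem i hi.le) t ht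
    have b7 : |(i:ℝ) / N - t| ≤ 1 / N := by
      have e : (i:ℝ) / N - t = (i - N * t) / N := by field_simp
      rw [e, abs_div, abs_of_pos hNp]
      gcongr
      rw [abs_le]; constructor <;> linarith
    have b8 := mul_le_mul_of_nonneg_left b7 hD0
    have b9 : 1 / N ^ 2 ≤ 1 / N := by
      apply one_div_le_one_div_of_le hNp
      nlinarith
    have e : (2 * D + 1) * (1 / N) = D / N + D * (1 / N) + 1 / N := by ring
    linarith


/-- for every pair of points `P, Q ∈ ℝ³` there is a minimizing geodesic `Γ` from
`P` to `Q`: `Γ` is Lipschitz for the metric `d_F`, has `L(Γ) = d_F(P,Q)`, and is the uniform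
limit in `d_F` of admissible locally Lipschitz curves joining `P` to `Q` whose degenerate
lengths converge to `d_F(P,Q)`. -/
theorem exists_minimizing_geodesic
    (W : ℝ × ℝ → ℝ) (pm pp : ℝ × ℝ) (hW : TwoWell W pm pp)
    (F : ℝ × ℝ → ℝ) (hF : F = fun p => Real.sqrt (W p)) (P Q : ℝ × ℝ × ℝ) :
    ∃ Γ : ℝ → ℝ × ℝ × ℝ,
      (∃ K : ℝ, ∀ s ∈ Set.Icc (0:ℝ) 1, ∀ t ∈ Set.Icc (0:ℝ) 1,
        dCC F (Γ s) (Γ t) ≤ K * |s - t|) ∧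
      Γ 0 = P ∧ Γ 1 = Q ∧ pathLen F 0 1 Γ = dCC F P Q ∧
      ∃ Γseq : ℕ → ℝ → ℝ × ℝ × ℝ,
        (∀ j, LocallyLipschitz (Γseq j) ∧ Admissible 0 1 (Γseq j) ∧
          Γseq j 0 = P ∧ Γseq j 1 = Q) ∧
        Tendsto (fun j => degLen F 0 1 (projCurve (Γseq j))) atTop (𝓝 (dCC F P Q)) ∧
        (∀ ε > 0, ∃ N : ℕ, ∀ j ≥ N, ∀ t ∈ Set.Icc (0:ℝ) 1, dCC F (Γseq j t) (Γ t) < ε) := by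
  have hF0 : ∀ p, 0 ≤ F p := fun p => by rw [hF]; exact Real.sqrt_nonneg _
  have hFc : Continuous F := by rw [hF]; exact hW.smooth.continuous.sqrt
  obtain ⟨Γ, h0, h1, hL⟩ := geo_exists hW hF P Q
  refine ⟨Γ, ⟨dCC F P Q, hL⟩, h0, h1, pathLen_eq h0 h1 hL, ?_⟩
  choose Γs hLL hAd hs0 hs1 hlo hup hun using approx hF0 hFc h0 h1 hL
  have hlim : Tendsto (fun n : ℕ => 1 / ((n : ℝ) + 1)) atTop (𝓝 0) :=
    tendsto_one_div_add_atTop_nhds_zero_nat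
  refine ⟨Γs, fun j => ⟨hLL j, hAd j, hs0 j, hs1 j⟩, ?_, ?_⟩
  · refine tendsto_of_tendsto_of_tendsto_of_le_of_le tendsto_const_nhds ?_ hlo hup
    simpa using hlim.const_add (dCC F P Q)
  · intro ε hε
    have h2 : Tendsto (fun n : ℕ => (2 * dCC F P Q + 1) * (1 / ((n : ℝ) + 1))) atTop (𝓝 0) := by
      simpa using hlim.const_mul (2 * dCC F P Q + 1)
    obtain ⟨N, hN⟩ := eventually_atTop.1 (h2.eventually (gt_mem_nhds hε))
    exact ⟨N, fun j hj t ht => (hun j t ht).trans_lt (hN j hj)⟩
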